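/- arXiv:2408.07936 — 6 statements merged into one kernel-verified Lean document; each statement's English description precedes it below -/
import Mathlib

section
/- Let b_1, …, b_l be a δ-LLL-reduced basis of a lattice in ℝ^m, let R = ‖b_1‖, and let v = Σ_{i=1}^{l} c_i b_i with integer coefficients c_i satisfy ‖v‖ < R. Then the last coefficient satisfies |c_l| < (δ − 1/4)^{1−l}. -/
open Finset
open scoped RealInnerProductSpace

/-- For a δ-LLL-reduced basis `b_1, …, b_l`, `R = ‖b_1‖`, and a lattice
vector `v = Σ c_i b_i` with integer coefficients and `‖v‖ < R`, the last coefficient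
satisfies `|c_l| < (δ − 1/4)^(1−l)`. -/
theorem lll_last_coefficient_bound
    (m l : ℕ) (hl : 1 ≤ l) (hlm : l ≤ m) (δ : ℝ) (hδ : 1/4 < δ ∧ δ < 1)
    (b bt : Fin l → EuclideanSpace ℝ (Fin m))
    (μ : Fin l → Fin l → ℝ)
    (hind : LinearIndependent ℝ b)
    (hμ : ∀ i j : Fin l, j < i → μ j i = ⟪b i, bt j⟫ / ⟪bt j, bt j⟫)
    (hbt : ∀ i : Fin l, bt i = b i - ∑ j ∈ Finset.Iio i, μ j i • bt j)
    (hsize : ∀ i j : Fin l, j < i → |μ j i| ≤ 1/2)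
    (hLovasz : ∀ (i : Fin l) (h : (i : ℕ) + 1 < l),
      ‖bt ⟨(i : ℕ) + 1, h⟩‖ ^ 2 ≥ (δ - (μ i ⟨(i : ℕ) + 1, h⟩) ^ 2) * ‖bt i‖ ^ 2)
    (R : ℝ) (hR : R = ‖b ⟨0, hl⟩‖)
    (c : Fin l → ℤ) (v : EuclideanSpace ℝ (Fin m))
    (hv : v = ∑ i, (c i : ℝ) • b i)
    (hvR : ‖v‖ < R) :
    |(c ⟨l - 1, by omega⟩ : ℝ)| < (δ - 1/4) ^ ((1 : ℤ) - (l : ℤ)) := by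
  have hgs : ∀ n : ℕ, ∀ i : Fin l, (i : ℕ) = n → bt i = InnerProductSpace.gramSchmidt ℝ b i := by
    intro n
    induction n using Nat.strong_induction_on with
    | _ n ih =>
      intro i hi
      rw [hbt i, InnerProductSpace.gramSchmidt_def]
      congr 1
      refine Finset.sum_congr rfl fun j hj => ?_
      have hji : j < i := Finset.mem_Iio.mp hj
      have hj' := ih j (by rw [← hi]; exact hji) j rfl
      rw [← hj', Submodule.starProjection_singleton, hμ i j hji, real_inner_comm]
      congr 2
      rw [real_inner_self_eq_norm_sq]
      simp
  have hgs' : ∀ i, bt i = InnerProductSpace.gramSchmidt ℝ b i := fun i => hgs i i rfl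
  have h0 : bt ⟨0, hl⟩ = b ⟨0, hl⟩ := by
    rw [hbt]
    have : Finset.Iio (⟨0, hl⟩ : Fin l) = ∅ := by
      ext x
      simp [Fin.lt_def]
    rw [this]; simp
  have ha0 : 0 < δ - 1/4 := by linarith [hδ.1]
  have ha1 : δ - 1/4 ≤ 1 := by linarith [hδ.2]
  have hchain : ∀ (k : ℕ) (hk : k < l),
      (δ - 1/4) ^ k * ‖bt ⟨0, hl⟩‖ ^ 2 ≤ ‖bt ⟨k, hk⟩‖ ^ 2 := by
    intro k
    induction k with
    | zero => intro hk; simp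
    | succ k ih =>
      intro hk
      have h1 := ih (by omega)
      have h2 := hLovasz ⟨k, by omega⟩ hk
      have h3 := hsize ⟨k + 1, hk⟩ ⟨k, by omega⟩ (by simp [Fin.lt_def])
      have h4 : (μ ⟨k, by omega⟩ ⟨k + 1, hk⟩) ^ 2 ≤ 1/4 := by
        rw [← sq_abs]
        nlinarith [abs_nonneg (μ ⟨k, by omega⟩ ⟨k + 1, hk⟩)]
      calc (δ - 1/4) ^ (k + 1) * ‖bt ⟨0, hl⟩‖ ^ 2
          = (δ - 1/4) * ((δ - 1/4) ^ k * ‖bt ⟨0, hl⟩‖ ^ 2) := by ring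
        _ ≤ (δ - 1/4) * ‖bt ⟨k, by omega⟩‖ ^ 2 := by gcongr
        _ ≤ (δ - (μ ⟨k, by omega⟩ ⟨k + 1, hk⟩) ^ 2) * ‖bt ⟨k, by omega⟩‖ ^ 2 := by gcongr
        _ ≤ _ := h2
  set L : Fin l := ⟨l - 1, by omega⟩ with hL
  have hbL : ∀ i, i ≠ L → ⟪bt L, b i⟫ = 0 := by
    intro i hi
    rw [hgs' L]
    apply InnerProductSpace.gramSchmidt_inv_triangular
    have : (i : ℕ) ≠ l - 1 := fun h => hi (Fin.ext h)
    rw [Fin.lt_def]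
    simp only [hL]
    omega
  have hLL : ⟪bt L, b L⟫ = ‖bt L‖ ^ 2 := by
    have : b L = bt L + ∑ j ∈ Finset.Iio L, μ j L • bt j := by rw [hbt L]; simp
    rw [this, inner_add_right, inner_sum, real_inner_self_eq_norm_sq, Finset.sum_eq_zero]
    · simp
    · intro j hj
      rw [inner_smul_right, hgs' L, hgs' j,
        InnerProductSpace.gramSchmidt_orthogonal ℝ b (Finset.mem_Iio.mp hj).ne', mul_zero]
  have hvL : ⟪bt L, v⟫ = c L * ‖bt L‖ ^ 2 := by
    rw [hv, inner_sum, Finset.sum_eq_single L]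
    · rw [inner_smul_right, hLL]
    · intro i _ hi
      rw [inner_smul_right, hbL i hi, mul_zero]
    · simp
  have hpos : 0 < ‖bt L‖ := by
    rw [hgs' L]
    exact norm_pos_iff.mpr (InnerProductSpace.gramSchmidt_ne_zero L hind)
  have hcs := abs_real_inner_le_norm (bt L) v
  rw [hvL, abs_mul, abs_of_nonneg (sq_nonneg ‖bt L‖)] at hcs
  have h5 : |(c L : ℝ)| * ‖bt L‖ < ‖bt ⟨0, hl⟩‖ := by
    rw [h0, ← hR]
    refine lt_of_le_of_lt ?_ hvR
    refine le_of_mul_le_mul_left ?_ hpos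
    linarith
  have h6 := hchain (l - 1) (by omega)
  change _ ≤ ‖bt L‖ ^ 2 at h6
  have hz : (δ - 1/4) ^ ((1 : ℤ) - (l : ℤ)) = ((δ - 1/4) ^ (l - 1))⁻¹ := by
    rw [← zpow_natCast, ← zpow_neg]
    congr 1
    omega
  rw [hz]
  have hp0 : 0 < (δ - 1/4) ^ (l - 1) := by positivity
  have hp1 : (δ - 1/4) ^ (l - 1) ≤ 1 := pow_le_one₀ ha0.le ha1
  generalize (δ - 1/4) ^ (l - 1) = p at *
  have hc0 := abs_nonneg (c L : ℝ)
  generalize |(c L : ℝ)| = x at *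
  have hr : 0 < ‖bt ⟨0, hl⟩‖ := lt_of_le_of_lt (by positivity) h5
  generalize ‖bt ⟨0, hl⟩‖ = r at *
  generalize ‖bt L‖ = s at *
  rw [← one_div, lt_div_iff₀ hp0]
  have h7 : (x * s) ^ 2 < r ^ 2 := by gcongr
  have h8 : x ^ 2 * p * r ^ 2 < 1 * r ^ 2 := by
    nlinarith [mul_le_mul_of_nonneg_left h6 (sq_nonneg x)]
  have h9 : x ^ 2 * p < 1 := lt_of_mul_lt_mul_right h8 (sq_nonneg r)
  have h10 : (x * p) ^ 2 < 1 := by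
    nlinarith [mul_le_mul_of_nonneg_left hp1 (mul_nonneg (sq_nonneg x) hp0.le)]
  nlinarith [mul_nonneg hc0 hp0.le]
end

section
/- Let b_1, …, b_l be a δ-LLL-reduced basis of a lattice in ℝ^m, let R = ‖b_1‖, and let v = Σ_{i=1}^{l} c_i b_i with integer coefficients c_i satisfy ‖v‖ < R. Then the second-to-last coefficient satisfies |c_{l−1}| ≤ (δ − 1/4)^{2−l} + (1/2)·(δ − 1/4)^{1−l}. -/
open Finset
open scoped RealInnerProductSpace

/-- Gram-Schmidt vectors are pairwise orthogonal. -/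
lemma gs_orth {E : Type*} [NormedAddCommGroup E] [InnerProductSpace ℝ E] {l : ℕ}
    (b bt : Fin l → E) (μ : Fin l → Fin l → ℝ)
    (hμ : ∀ i j : Fin l, j < i → μ j i = ⟪b i, bt j⟫ / ⟪bt j, bt j⟫)
    (hbt : ∀ i : Fin l, bt i = b i - ∑ j ∈ Finset.Iio i, μ j i • bt j) :
    ∀ i j : Fin l, j < i → ⟪bt i, bt j⟫ = 0 := by
  intro i
  induction i using WellFoundedLT.induction with
  | ind i ih =>
    intro j hj
    rw [hbt i, inner_sub_left, sum_inner, Finset.sum_eq_single j]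
    · rw [inner_smul_left, hμ i j hj]
      by_cases h0 : bt j = 0
      · simp [h0]
      · have : ⟪bt j, bt j⟫ ≠ 0 := by simpa using h0
        simp only [conj_trivial]
        rw [div_mul_cancel₀ _ this, sub_self]
    · intro k hk hkj
      rw [inner_smul_left]
      have hk' : k < i := by simpa using hk
      rcases lt_or_gt_of_ne hkj with h | h
      · rw [real_inner_comm, ih j hj k h, mul_zero]
      · rw [ih k hk' j h, mul_zero]
    · intro h
      exact absurd (by simpa using hj) h

lemma coef_bound {α x N V R : ℝ} {k : ℕ} (hα : 0 < α) (hα1 : α < 1) (hV : 0 ≤ V) (hVR : V < R)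
    (hN : 0 ≤ N) (hk : α ^ k * R ^ 2 ≤ N ^ 2) (hx : |x * N ^ 2| ≤ V * N) :
    |x| ≤ (α ^ k)⁻¹ := by
  have hR : 0 < R := by linarith
  have hp : 0 < α ^ k := by positivity
  have hp1 : α ^ k ≤ 1 := pow_le_one₀ hα.le hα1.le
  have hN2 : 0 < N ^ 2 := lt_of_lt_of_le (by positivity) hk
  have hN0 : 0 < N := by
    rcases hN.eq_or_lt with h | h
    · rw [← h] at hN2; norm_num at hN2
    · exact h
  rw [abs_mul, abs_of_pos hN2] at hx
  have h1 : |x| * N ≤ R := by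
    have : |x| * N * N ≤ V * N := by nlinarith
    have := le_of_mul_le_mul_right this hN0
    linarith
  have h2 : (α ^ k * R) ≤ N := by
    refine abs_le_of_sq_le_sq' ?_ hN |>.2
    calc (α ^ k * R) ^ 2 = α ^ k * (α ^ k * R ^ 2) := by ring
      _ ≤ 1 * (α ^ k * R ^ 2) := by gcongr
      _ ≤ N ^ 2 := by linarith
  rw [← one_div, le_div_iff₀ hp]
  have h3 : (|x| * α ^ k) * R ≤ 1 * R := by
    calc (|x| * α ^ k) * R = |x| * (α ^ k * R) := by ring
      _ ≤ |x| * N := by gcongr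
      _ ≤ 1 * R := by linarith
  exact le_of_mul_le_mul_right h3 hR

/-- For a δ-LLL-reduced basis `b_1, …, b_l` (`l ≥ 2`), `R = ‖b_1‖`, and a
lattice vector `v = Σ c_i b_i` with integer coefficients and `‖v‖ < R`, the
second-to-last coefficient satisfies
`|c_{l−1}| ≤ (δ − 1/4)^(2−l) + (1/2)·(δ − 1/4)^(1−l)`. -/
theorem lll_second_to_last_coefficient_bound
    (m l : ℕ) (hl : 2 ≤ l) (hlm : l ≤ m) (δ : ℝ) (hδ : 1/4 < δ ∧ δ < 1)
    (b bt : Fin l → EuclideanSpace ℝ (Fin m))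
    (μ : Fin l → Fin l → ℝ)
    (hind : LinearIndependent ℝ b)
    (hμ : ∀ i j : Fin l, j < i → μ j i = ⟪b i, bt j⟫ / ⟪bt j, bt j⟫)
    (hbt : ∀ i : Fin l, bt i = b i - ∑ j ∈ Finset.Iio i, μ j i • bt j)
    (hsize : ∀ i j : Fin l, j < i → |μ j i| ≤ 1/2)
    (hLovasz : ∀ (i : Fin l) (h : (i : ℕ) + 1 < l),
      ‖bt ⟨(i : ℕ) + 1, h⟩‖ ^ 2 ≥ (δ - (μ i ⟨(i : ℕ) + 1, h⟩) ^ 2) * ‖bt i‖ ^ 2)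
    (R : ℝ) (hR : R = ‖b ⟨0, by omega⟩‖)
    (c : Fin l → ℤ) (v : EuclideanSpace ℝ (Fin m))
    (hv : v = ∑ i, (c i : ℝ) • b i)
    (hvR : ‖v‖ < R) :
    |(c ⟨l - 2, by omega⟩ : ℝ)| ≤
      (δ - 1/4) ^ ((2 : ℤ) - (l : ℤ)) + (1/2) * (δ - 1/4) ^ ((1 : ℤ) - (l : ℤ)) := by
  obtain ⟨hδ0, hδ1⟩ := hδ
  have horth := gs_orth b bt μ hμ hbt
  have hb : ∀ i, b i = bt i + ∑ j ∈ Finset.Iio i, μ j i • bt j := by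
    intro i; rw [hbt i]; abel
  have hb_lt : ∀ i j : Fin l, i < j → ⟪b i, bt j⟫ = 0 := by
    intro i j hij
    rw [hb i, inner_add_left, sum_inner, real_inner_comm, horth j i hij, zero_add]
    apply Finset.sum_eq_zero
    intro k hk
    have hk' : k < i := by simpa using hk
    rw [inner_smul_left, real_inner_comm, horth j k (hk'.trans hij), mul_zero]
  have hb_eq : ∀ i : Fin l, ⟪b i, bt i⟫ = ‖bt i‖ ^ 2 := by
    intro i
    rw [hb i, inner_add_left, sum_inner, real_inner_self_eq_norm_sq]
    rw [Finset.sum_eq_zero, add_zero]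
    intro k hk
    have hk' : k < i := by simpa using hk
    rw [inner_smul_left, real_inner_comm, horth i k hk', mul_zero]
  have hb_gt : ∀ i j : Fin l, j < i → ⟪b i, bt j⟫ = μ j i * ‖bt j‖ ^ 2 := by
    intro i j hij
    rw [hμ i j hij, ← real_inner_self_eq_norm_sq]
    by_cases h0 : bt j = 0
    · simp [h0]
    · have : ⟪bt j, bt j⟫ ≠ 0 := by simpa using h0
      rw [div_mul_cancel₀ _ this]
  have hα : 0 < δ - 1/4 := by linarith
  have hα1 : δ - 1/4 < 1 := by linarith
  have hgrow : ∀ (k : ℕ) (hk : k < l), (δ - 1/4) ^ k * R ^ 2 ≤ ‖bt ⟨k, hk⟩‖ ^ 2 := by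
    intro k
    induction k with
    | zero =>
      intro hk
      have : bt ⟨0, hk⟩ = b ⟨0, hk⟩ := by
        rw [hbt, Finset.sum_eq_zero, sub_zero]
        intro j hj
        have : j < ⟨0, hk⟩ := by simpa using hj
        simp [Fin.lt_def] at this
      rw [this, hR]; simp
    | succ k ih =>
      intro hk
      have h1 := ih (by omega)
      have h2 := hLovasz ⟨k, by omega⟩ hk
      have h3 := hsize ⟨k + 1, hk⟩ ⟨k, by omega⟩ (by simp [Fin.lt_def])
      have h4 : (μ ⟨k, by omega⟩ ⟨k + 1, hk⟩) ^ 2 ≤ 1/4 := by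
        rw [← sq_abs]
        nlinarith [abs_nonneg (μ ⟨k, by omega⟩ ⟨k + 1, hk⟩)]
      calc (δ - 1/4) ^ (k + 1) * R ^ 2 = (δ - 1/4) * ((δ - 1/4) ^ k * R ^ 2) := by ring
        _ ≤ (δ - 1/4) * ‖bt ⟨k, by omega⟩‖ ^ 2 := by gcongr
        _ ≤ (δ - (μ ⟨k, by omega⟩ ⟨k + 1, hk⟩) ^ 2) * ‖bt ⟨k, by omega⟩‖ ^ 2 := by gcongr
        _ ≤ _ := h2
  have hinner : ∀ j, ⟪v, bt j⟫ = ∑ i, (c i : ℝ) * ⟪b i, bt j⟫ := by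
    intro j
    rw [hv, sum_inner]
    simp [inner_smul_left]
  set p : Fin l := ⟨l - 2, by omega⟩ with hp
  set q : Fin l := ⟨l - 1, by omega⟩ with hq
  have hpq : p < q := by simp only [hp, hq, Fin.lt_def]; omega
  have hq1 : ⟪v, bt q⟫ = (c q : ℝ) * ‖bt q‖ ^ 2 := by
    rw [hinner, Finset.sum_eq_single q, hb_eq]
    · intro i _ hi
      have : i < q := by
        have := i.2
        simp only [hq, Fin.lt_def, ne_eq, Fin.ext_iff] at hi ⊢; omega
      rw [hb_lt i q this, mul_zero]
    · simp
  have hp1 : ⟪v, bt p⟫ = ((c p : ℝ) + c q * μ p q) * ‖bt p‖ ^ 2 := by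
    rw [hinner, Finset.sum_eq_add p q hpq.ne, hb_eq, hb_gt q p hpq]
    · ring
    · intro i _ hi
      have : i < p := by
        have := i.2
        simp only [hp, hq, Fin.lt_def, ne_eq, Fin.ext_iff] at hi ⊢; omega
      rw [hb_lt i p this, mul_zero]
    · simp
    · simp
  have hQ : |(c q : ℝ)| ≤ ((δ - 1/4) ^ (l - 1))⁻¹ :=
    coef_bound hα hα1 (norm_nonneg v) hvR (norm_nonneg (bt q)) (hgrow _ _)
      (by rw [← hq1]; exact abs_real_inner_le_norm _ _)
  have hP : |(c p : ℝ) + c q * μ p q| ≤ ((δ - 1/4) ^ (l - 2))⁻¹ :=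
    coef_bound hα hα1 (norm_nonneg v) hvR (norm_nonneg (bt p)) (hgrow _ _)
      (by rw [← hp1]; exact abs_real_inner_le_norm _ _)
  have e1 : (δ - 1/4) ^ ((2 : ℤ) - (l : ℤ)) = ((δ - 1/4) ^ (l - 2))⁻¹ := by
    rw [← zpow_natCast, ← zpow_neg]; congr 1; omega
  have e2 : (δ - 1/4) ^ ((1 : ℤ) - (l : ℤ)) = ((δ - 1/4) ^ (l - 1))⁻¹ := by
    rw [← zpow_natCast, ← zpow_neg]; congr 1; omega
  rw [e1, e2]
  have hm : |(c q : ℝ) * μ p q| ≤ ((δ - 1/4) ^ (l - 1))⁻¹ * (1/2) := by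
    rw [abs_mul]
    exact mul_le_mul hQ (hsize q p hpq) (abs_nonneg _) (by positivity)
  have ht := abs_sub ((c p : ℝ) + c q * μ p q) (c q * μ p q)
  rw [add_sub_cancel_right] at ht
  linarith
end

section
/- Let b_1, …, b_l be a δ-LLL-reduced basis of a lattice in ℝ^m, let R = ‖b_1‖, and define γ_l = (δ − 1/4)^{1−l} and recursively γ_{l−i} = (δ − 1/4)^{1+i−l} + (1/2)·Σ_{k=0}^{i−1} γ_{l−k} for i = 1, …, l−1. Then every lattice vector v = Σ_{i=1}^{l} c_i b_i with integer coefficients c_i and ‖v‖ < R satisfies |c_{l−i}| ≤ γ_{l−i} for all i = 0, 1, …, l−1. -/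
open Finset
open scoped RealInnerProductSpace

/-- For a δ-LLL-reduced basis `b_1, …, b_l`, `R = ‖b_1‖`, and the
sequence `γ` defined by `γ_l = (δ − 1/4)^(1−l)` and
`γ_{l−i} = (δ − 1/4)^(1+i−l) + (1/2)·Σ_{k=0}^{i−1} γ_{l−k}` for `i = 1, …, l−1`
(below, `γ i` stands for the paper's `γ_{l−i}`), every lattice vector `v = Σ c_i b_i`
with integer coefficients and `‖v‖ < R` satisfies `|c_{l−i}| ≤ γ_{l−i}` for all
`i = 0, 1, …, l−1`. -/
theorem lll_all_coefficients_bound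
    (m l : ℕ) (hl : 1 ≤ l) (hlm : l ≤ m) (δ : ℝ) (hδ : 1/4 < δ ∧ δ < 1)
    (b bt : Fin l → EuclideanSpace ℝ (Fin m))
    (μ : Fin l → Fin l → ℝ)
    (hind : LinearIndependent ℝ b)
    (hμ : ∀ i j : Fin l, j < i → μ j i = ⟪b i, bt j⟫ / ⟪bt j, bt j⟫)
    (hbt : ∀ i : Fin l, bt i = b i - ∑ j ∈ Finset.Iio i, μ j i • bt j)
    (hsize : ∀ i j : Fin l, j < i → |μ j i| ≤ 1/2)
    (hLovasz : ∀ (i : Fin l) (h : (i : ℕ) + 1 < l),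
      ‖bt ⟨(i : ℕ) + 1, h⟩‖ ^ 2 ≥ (δ - (μ i ⟨(i : ℕ) + 1, h⟩) ^ 2) * ‖bt i‖ ^ 2)
    (R : ℝ) (hR : R = ‖b ⟨0, by omega⟩‖)
    (γ : ℕ → ℝ)
    (hγ0 : γ 0 = (δ - 1/4) ^ ((1 : ℤ) - (l : ℤ)))
    (hγ : ∀ i : ℕ, 1 ≤ i → i ≤ l - 1 →
      γ i = (δ - 1/4) ^ ((1 : ℤ) + (i : ℤ) - (l : ℤ)) +
        (1/2) * ∑ k ∈ Finset.range i, γ k)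
    (c : Fin l → ℤ) (v : EuclideanSpace ℝ (Fin m))
    (hv : v = ∑ i, (c i : ℝ) • b i)
    (hvR : ‖v‖ < R) :
    ∀ i : ℕ, ∀ h : i < l, |(c ⟨l - 1 - i, by omega⟩ : ℝ)| ≤ γ i := by
  obtain ⟨hδ1, hδ2⟩ := hδ
  have horth : ∀ n : ℕ, ∀ i j : Fin l, (i : ℕ) = n → j < i → ⟪bt i, bt j⟫ = 0 := by
    intro n
    induction n using Nat.strong_induction_on with
    | _ n ih =>
      intro i j hin hji
      have hsum : ∑ k ∈ Finset.Iio i, ⟪μ k i • bt k, bt j⟫ = ⟪μ j i • bt j, bt j⟫ := by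
        apply Finset.sum_eq_single j
        · intro k hk hkj
          have hki : k < i := Finset.mem_Iio.mp hk
          rw [real_inner_smul_left]
          rcases lt_or_gt_of_ne hkj with h | h
          · rw [real_inner_comm, ih j (by rw [← hin]; exact hji) j k rfl h, mul_zero]
          · rw [ih k (by rw [← hin]; exact hki) k j rfl h, mul_zero]
        · intro h
          exact absurd (Finset.mem_Iio.mpr hji) h
      rw [hbt i, inner_sub_left, sum_inner, hsum, real_inner_smul_left, hμ i j hji]
      by_cases h0 : bt j = 0
      · simp [h0]
      · have : ⟪bt j, bt j⟫ ≠ 0 := fun h => h0 (inner_self_eq_zero.mp h)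
        field_simp
        ring
  have horth2 : ∀ i j : Fin l, i ≠ j → ⟪bt i, bt j⟫ = 0 := by
    intro i j hij
    rcases lt_or_gt_of_ne hij with h | h
    · rw [real_inner_comm]; exact horth _ j i rfl h
    · exact horth _ i j rfl h
  have hb : ∀ i, b i = bt i + ∑ j ∈ Finset.Iio i, μ j i • bt j := by
    intro i; rw [hbt i]; simp
  have hinn : ∀ i k : Fin l, ⟪b i, bt k⟫ =
      (if i = k then 1 else if k < i then μ k i else 0) * ‖bt k‖ ^ 2 := by
    intro i k
    rw [hb i, inner_add_left, sum_inner]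
    have hs : ∑ j ∈ Finset.Iio i, ⟪μ j i • bt j, bt k⟫ =
        ∑ j ∈ Finset.Iio i, if j = k then μ k i * ‖bt k‖ ^ 2 else 0 := by
      apply Finset.sum_congr rfl
      intro j hj
      rw [real_inner_smul_left]
      split_ifs with h
      · rw [h, real_inner_self_eq_norm_sq]
      · rw [horth2 j k h, mul_zero]
    rw [hs, Finset.sum_ite_eq']
    by_cases h : i = k
    · subst h
      simp
    · rw [horth2 i k h]
      by_cases h2 : k < i <;> simp [h, h2]
  have ha0 : 0 < δ - 1/4 := by linarith
  have ha1 : δ - 1/4 ≤ 1 := by linarith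
  have hRpos : 0 < R := lt_of_le_of_lt (norm_nonneg _) hvR
  have hgrow : ∀ n : ℕ, ∀ h : n < l, (δ - 1/4) ^ n * R ^ 2 ≤ ‖bt ⟨n, h⟩‖ ^ 2 := by
    intro n
    induction n with
    | zero =>
      intro h
      have : bt ⟨0, h⟩ = b ⟨0, h⟩ := by
        rw [hbt]
        have : Finset.Iio (⟨0, h⟩ : Fin l) = ∅ := by
          ext x; simp [Fin.lt_def]
        rw [this]; simp
      rw [this, hR]; simp
    | succ n ih =>
      intro h
      have h1 := ih (by omega)
      have h2 := hLovasz ⟨n, by omega⟩ h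
      have h3 := hsize ⟨n + 1, h⟩ ⟨n, by omega⟩ (by simp [Fin.lt_def])
      have h4 : (μ ⟨n, by omega⟩ ⟨n + 1, h⟩) ^ 2 ≤ 1/4 := by
        rw [← sq_abs]
        nlinarith [abs_nonneg (μ ⟨n, by omega⟩ ⟨n + 1, h⟩)]
      calc (δ - 1/4) ^ (n+1) * R ^ 2 = (δ - 1/4) * ((δ - 1/4) ^ n * R ^ 2) := by ring
        _ ≤ (δ - 1/4) * ‖bt ⟨n, by omega⟩‖ ^ 2 := by gcongr
        _ ≤ (δ - (μ ⟨n, by omega⟩ ⟨n + 1, h⟩) ^ 2) * ‖bt ⟨n, by omega⟩‖ ^ 2 := by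
            gcongr
        _ ≤ _ := h2
  have hmain : ∀ k : Fin l, |(c k : ℝ)| ≤ ((δ - 1/4) ^ (k : ℕ))⁻¹ +
      (1/2) * ∑ i ∈ Finset.Ioi k, |(c i : ℝ)| := by
    intro k
    set S : ℝ := c k + ∑ i ∈ Finset.Ioi k, c i * μ k i with hS
    have hvk : ⟪v, bt k⟫ = S * ‖bt k‖ ^ 2 := by
      rw [hv, sum_inner]
      have : ∀ i, ⟪(c i : ℝ) • b i, bt k⟫ =
          ((if i = k then (c k : ℝ) else 0) + (if k < i then c i * μ k i else 0)) *
            ‖bt k‖ ^ 2 := by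
        intro i
        rw [real_inner_smul_left, hinn]
        by_cases h : i = k
        · subst h; simp
        · by_cases h2 : k < i <;> simp [h, h2] <;> ring
      rw [Finset.sum_congr rfl (fun i _ => this i), ← Finset.sum_mul,
        Finset.sum_add_distrib, Finset.sum_ite_eq', ← Finset.sum_filter, hS]
      have hf : Finset.univ.filter (fun i => k < i) = Finset.Ioi k := by ext; simp
      rw [hf]; simp
    have hg := hgrow k k.2
    simp only [Fin.eta] at hg
    have hp : 0 < (δ - 1/4) ^ (k : ℕ) := pow_pos ha0 _
    have hp1 : (δ - 1/4) ^ (k : ℕ) ≤ 1 := pow_le_one₀ ha0.le ha1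
    have hbp : 0 < ‖bt k‖ := by
      rcases (norm_nonneg (bt k)).eq_or_lt with h | h
      · rw [← h] at hg
        have : 0 < (δ - 1/4) ^ (k : ℕ) * R ^ 2 := by positivity
        norm_num at hg
        linarith
      · exact h
    have hcs : |S| * ‖bt k‖ ≤ R := by
      have h := abs_real_inner_le_norm v (bt k)
      rw [hvk, abs_mul, abs_of_nonneg (sq_nonneg ‖bt k‖)] at h
      have : |S| * ‖bt k‖ ≤ ‖v‖ := by
        apply le_of_mul_le_mul_right _ hbp
        linarith [h]
      linarith
    have hSb : |S| ≤ ((δ - 1/4) ^ (k : ℕ))⁻¹ := by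
      set p := (δ - 1/4) ^ (k : ℕ)
      have h1 : |S| ^ 2 * ‖bt k‖ ^ 2 ≤ R ^ 2 := by
        rw [← mul_pow]; gcongr
      have h2 : (|S| ^ 2 * p) * R ^ 2 ≤ 1 * R ^ 2 := by
        calc (|S| ^ 2 * p) * R ^ 2 = |S| ^ 2 * (p * R ^ 2) := by ring
          _ ≤ |S| ^ 2 * ‖bt k‖ ^ 2 := by gcongr
          _ ≤ 1 * R ^ 2 := by rw [one_mul]; exact h1
      have h3 : |S| ^ 2 * p ≤ 1 := le_of_mul_le_mul_right h2 (by positivity)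
      rw [← one_div, le_div_iff₀ hp]
      have h4 : (|S| * p) ^ 2 ≤ 1 := by
        calc (|S| * p) ^ 2 = (|S| ^ 2 * p) * p := by ring
          _ ≤ 1 * 1 := by gcongr
          _ = 1 := by ring
      nlinarith [mul_nonneg (abs_nonneg S) hp.le]
    have hc : (c k : ℝ) = S - ∑ i ∈ Finset.Ioi k, c i * μ k i := by rw [hS]; ring
    have hsum : |∑ i ∈ Finset.Ioi k, (c i : ℝ) * μ k i| ≤
        (1/2) * ∑ i ∈ Finset.Ioi k, |(c i : ℝ)| := by
      refine (Finset.abs_sum_le_sum_abs _ _).trans ?_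
      rw [Finset.mul_sum]
      apply Finset.sum_le_sum
      intro i hi
      rw [abs_mul, mul_comm]
      have := hsize i k (Finset.mem_Ioi.mp hi)
      gcongr
    calc |(c k : ℝ)| = |S - ∑ i ∈ Finset.Ioi k, c i * μ k i| := by rw [← hc]
      _ ≤ |S| + |∑ i ∈ Finset.Ioi k, (c i : ℝ) * μ k i| := abs_sub _ _
      _ ≤ _ := add_le_add hSb hsum
  have hγ' : ∀ i : ℕ, i < l → γ i = ((δ - 1/4) ^ (l - 1 - i))⁻¹ +
        (1/2) * ∑ k ∈ Finset.range i, γ k := by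
    intro i hi
    have he : ((δ - 1/4) ^ (l - 1 - i))⁻¹ = (δ - 1/4) ^ ((1 : ℤ) + (i : ℤ) - (l : ℤ)) := by
      rw [← zpow_natCast, ← zpow_neg]
      congr 1
      omega
    rw [he]
    rcases Nat.eq_zero_or_pos i with h | h
    · subst h; rw [hγ0]; simp
    · exact hγ i h (by omega)
  intro i
  induction i using Nat.strong_induction_on with
  | _ i ih =>
    intro h
    refine (hmain _).trans ?_
    rw [hγ' i h]
    have hle : ∑ j ∈ Finset.Ioi (⟨l - 1 - i, by omega⟩ : Fin l), |(c j : ℝ)| ≤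
        ∑ k ∈ Finset.range i, γ k := by
      have h1 : ∑ j ∈ Finset.Ioi (⟨l - 1 - i, by omega⟩ : Fin l), |(c j : ℝ)| ≤
          ∑ j ∈ Finset.Ioi (⟨l - 1 - i, by omega⟩ : Fin l), γ (l - 1 - j) := by
        apply Finset.sum_le_sum
        intro j hj
        have hj' : l - 1 - i < (j : ℕ) := Fin.lt_def.mp (Finset.mem_Ioi.mp hj)
        have h2 := ih (l - 1 - j) (by omega) (by omega)
        have h3 : (⟨l - 1 - (l - 1 - (j : ℕ)), by omega⟩ : Fin l) = j := by
          ext; simp only; omega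
        rwa [h3] at h2
      refine h1.trans (le_of_eq ?_)
      apply Finset.sum_bij (fun (j : Fin l) _ => l - 1 - (j : ℕ))
      · intro j hj
        have hj' : l - 1 - i < (j : ℕ) := Fin.lt_def.mp (Finset.mem_Ioi.mp hj)
        simp only [Finset.mem_range]; omega
      · intro x hx y hy hxy
        ext; omega
      · intro t ht
        have ht' := Finset.mem_range.mp ht
        refine ⟨⟨l - 1 - t, by omega⟩, ?_, ?_⟩
        · simp only [Finset.mem_Ioi, Fin.lt_def]; omega
        · simp only; omega
      · intro j hj; rfl
    simp only
    gcongr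
end

section
/- Let b_1, …, b_l be a (3/4)-LLL-reduced basis of a lattice in ℝ^m and let R = ‖b_1‖. Then every lattice vector v = Σ_{i=1}^{l} c_i b_i with integer coefficients c_i and ‖v‖ < R satisfies |c_{l−i}| < 2^{l+i−1} for all i = 0, 1, …, l−1. -/
open Finset
open scoped RealInnerProductSpace

lemma aux_seq (d : ℕ → ℝ) (A : ℝ) (hA : 0 ≤ A) (l : ℕ)
    (h : ∀ i < l, d i < A + 1/2 * ∑ k ∈ Finset.range i, d k) :
    ∀ i ≤ l, ∑ k ∈ Finset.range i, d k ≤ A * (2 ^ i - 1) := by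
  intro i
  induction i with
  | zero => intro _; simp
  | succ i ih =>
    intro hi
    have h1 := ih (by omega)
    have h2 := h i (by omega)
    rw [Finset.sum_range_succ, pow_succ]
    have : (1:ℝ) ≤ 2 ^ i := one_le_pow₀ (by norm_num)
    nlinarith

/-- For a (3/4)-LLL-reduced basis `b_1, …, b_l` and `R = ‖b_1‖`, every
lattice vector `v = Σ c_i b_i` with integer coefficients and `‖v‖ < R` satisfies
`|c_{l−i}| < 2^(l+i−1)` for all `i = 0, 1, …, l−1`. -/
theorem lll_three_quarters_coefficient_bound
    (m l : ℕ) (hl : 1 ≤ l) (hlm : l ≤ m)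
    (b bt : Fin l → EuclideanSpace ℝ (Fin m))
    (μ : Fin l → Fin l → ℝ)
    (hind : LinearIndependent ℝ b)
    (hμ : ∀ i j : Fin l, j < i → μ j i = ⟪b i, bt j⟫ / ⟪bt j, bt j⟫)
    (hbt : ∀ i : Fin l, bt i = b i - ∑ j ∈ Finset.Iio i, μ j i • bt j)
    (hsize : ∀ i j : Fin l, j < i → |μ j i| ≤ 1/2)
    (hLovasz : ∀ (i : Fin l) (h : (i : ℕ) + 1 < l),
      ‖bt ⟨(i : ℕ) + 1, h⟩‖ ^ 2 ≥ (3/4 - (μ i ⟨(i : ℕ) + 1, h⟩) ^ 2) * ‖bt i‖ ^ 2)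
    (R : ℝ) (hR : R = ‖b ⟨0, by omega⟩‖)
    (c : Fin l → ℤ) (v : EuclideanSpace ℝ (Fin m))
    (hv : v = ∑ i, (c i : ℝ) • b i)
    (hvR : ‖v‖ < R) :
    ∀ i : ℕ, ∀ h : i < l,
      |(c ⟨l - 1 - i, by omega⟩ : ℝ)| < 2 ^ (l + i - 1) := by
  have hb : ∀ i, b i = bt i + ∑ j ∈ Finset.Iio i, μ j i • bt j := by
    intro i
    have := hbt i
    rw [this]; abel_nf
  -- orthogonality
  have horth : ∀ n : ℕ, ∀ i j : Fin l, (i : ℕ) < n → j < i → ⟪bt i, bt j⟫ = 0 := by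
    intro n
    induction n with
    | zero => intro i j h; omega
    | succ n ih =>
      intro i j hi hj
      rw [hbt i, inner_sub_left, sum_inner]
      rw [Finset.sum_eq_single j]
      · rw [inner_smul_left, hμ i j hj]
        by_cases h0 : bt j = 0
        · simp [h0]
        · have : ⟪bt j, bt j⟫ ≠ 0 := by simpa using h0
          simp only [conj_trivial]
          field_simp
          simp
      · intro k hk hkj
        rw [Finset.mem_Iio] at hk
        rw [inner_smul_left]
        rcases lt_or_gt_of_ne hkj with h | h
        · rw [real_inner_comm, ih j k (by omega) h, mul_zero]
        · rw [ih k j (by omega) h, mul_zero]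
      · intro h
        exact absurd (Finset.mem_Iio.2 hj) h
  have ho : ∀ i j : Fin l, i ≠ j → ⟪bt i, bt j⟫ = 0 := by
    intro i j hij
    rcases lt_or_gt_of_ne hij with h | h
    · rw [real_inner_comm]; exact horth _ j i (Nat.lt_succ_self _) h
    · exact horth _ i j (Nat.lt_succ_self _) h
  have hin_lt : ∀ i j : Fin l, i < j → ⟪b i, bt j⟫ = 0 := by
    intro i j hij
    rw [hb i, inner_add_left, sum_inner, ho i j hij.ne, zero_add]
    apply Finset.sum_eq_zero
    intro k hk
    rw [Finset.mem_Iio] at hk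
    rw [inner_smul_left, ho k j (hk.trans hij).ne, mul_zero]
  have hin_eq : ∀ j : Fin l, ⟪b j, bt j⟫ = ‖bt j‖ ^ 2 := by
    intro j
    rw [hb j, inner_add_left, sum_inner, real_inner_self_eq_norm_sq]
    rw [Finset.sum_eq_zero, add_zero]
    intro k hk
    rw [Finset.mem_Iio] at hk
    rw [inner_smul_left, ho k j hk.ne, mul_zero]
  have hR0 : R = ‖bt ⟨0, by omega⟩‖ := by
    rw [hR, hbt ⟨0, by omega⟩]
    have : Finset.Iio (⟨0, by omega⟩ : Fin l) = ∅ := by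
      ext k; simp [Fin.lt_def]
    rw [this]; simp
  have hRpos : 0 < R := lt_of_le_of_lt (norm_nonneg _) hvR
  have hgrow : ∀ k : ℕ, ∀ hk : k < l, R ^ 2 ≤ 2 ^ k * ‖bt ⟨k, hk⟩‖ ^ 2 := by
    intro k
    induction k with
    | zero => intro hk; rw [hR0]; simp
    | succ k ih =>
      intro hk
      have h1 := ih (by omega)
      have h2 := hLovasz ⟨k, by omega⟩ hk
      have h3 := hsize ⟨k+1, hk⟩ ⟨k, by omega⟩ (by simp [Fin.lt_def])
      have h4 : (μ ⟨k, by omega⟩ ⟨k+1, hk⟩) ^ 2 ≤ 1/4 := by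
        have := sq_le_sq' (by linarith [neg_le_of_abs_le h3]) (le_of_abs_le h3)
        linarith
      have h5 : 1/2 * ‖bt ⟨k, by omega⟩‖ ^ 2 ≤ ‖bt ⟨k+1, hk⟩‖ ^ 2 := by
        refine le_trans ?_ h2
        apply mul_le_mul_of_nonneg_right _ (sq_nonneg _)
        simp only
        linarith
      have h6 : (0:ℝ) < 2 ^ k := by positivity
      rw [pow_succ (2:ℝ) k]
      have h7 := mul_le_mul_of_nonneg_left h5 h6.le
      nlinarith
  -- main inequality
  have hmain : ∀ j : Fin l, |(c j : ℝ)| < 2 ^ (l - 1) +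
      1/2 * ∑ i ∈ Finset.Ioi j, |(c i : ℝ)| := by
    intro j
    have hg := hgrow j j.2
    simp only [Fin.eta] at hg
    have hN : 0 < ‖bt j‖ := by
      rcases (norm_nonneg (bt j)).eq_or_lt with h | h
      · rw [← h] at hg; nlinarith
      · exact h
    have hRle : R ≤ 2 ^ (l-1) * ‖bt j‖ := by
      apply le_of_sq_le_sq _ (by positivity)
      have a1 : (2:ℝ) ^ (j:ℕ) ≤ 2 ^ (l-1) := pow_le_pow_right₀ (by norm_num) (by omega)
      have a2 : (1:ℝ) ≤ 2 ^ (l-1) := one_le_pow₀ (by norm_num)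
      calc R ^ 2 ≤ 2 ^ (j:ℕ) * ‖bt j‖ ^ 2 := hg
        _ ≤ (2 ^ (l-1)) ^ 2 * ‖bt j‖ ^ 2 := by
          apply mul_le_mul_of_nonneg_right _ (sq_nonneg _)
          nlinarith
        _ = _ := by ring
    have hsum : ⟪v, bt j⟫ = (c j : ℝ) * ‖bt j‖ ^ 2 +
        ∑ i ∈ Finset.Ioi j, (c i : ℝ) * (μ j i * ‖bt j‖ ^ 2) := by
      have e1 : ⟪v, bt j⟫ = ∑ i ∈ Finset.Ici j, (c i : ℝ) * ⟪b i, bt j⟫ := by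
        rw [hv, sum_inner]
        symm
        simp only [inner_smul_left, conj_trivial]
        apply Finset.sum_subset (Finset.subset_univ _)
        intro i _ hi
        rw [Finset.mem_Ici, not_le] at hi
        rw [hin_lt i j hi, mul_zero]
      rw [e1, ← Finset.Ioi_insert, Finset.sum_insert (by simp), hin_eq]
      congr 1
      apply Finset.sum_congr rfl
      intro i hi
      rw [Finset.mem_Ioi] at hi
      rw [hμ i j hi, real_inner_self_eq_norm_sq]
      field_simp
    have hcs : |⟪v, bt j⟫| < 2 ^ (l-1) * ‖bt j‖ ^ 2 := by
      calc |⟪v, bt j⟫| ≤ ‖v‖ * ‖bt j‖ := abs_real_inner_le_norm _ _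
        _ < R * ‖bt j‖ := by gcongr
        _ ≤ 2 ^ (l-1) * ‖bt j‖ * ‖bt j‖ := by gcongr
        _ = _ := by ring
    have hS : |∑ i ∈ Finset.Ioi j, (c i : ℝ) * (μ j i * ‖bt j‖ ^ 2)| ≤
        (1/2 * ∑ i ∈ Finset.Ioi j, |(c i : ℝ)|) * ‖bt j‖ ^ 2 := by
      refine (Finset.abs_sum_le_sum_abs _ _).trans ?_
      rw [Finset.mul_sum, Finset.sum_mul]
      apply Finset.sum_le_sum
      intro i hi
      rw [Finset.mem_Ioi] at hi
      rw [abs_mul, abs_mul, abs_of_nonneg (sq_nonneg ‖bt j‖)]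
      have := mul_le_mul_of_nonneg_left (hsize i j hi)
        (mul_nonneg (abs_nonneg (c i : ℝ)) (sq_nonneg ‖bt j‖))
      nlinarith
    have hc : (c j : ℝ) * ‖bt j‖ ^ 2 = ⟪v, bt j⟫ -
        ∑ i ∈ Finset.Ioi j, (c i : ℝ) * (μ j i * ‖bt j‖ ^ 2) := by
      rw [hsum]; ring
    have hfin : |(c j : ℝ)| * ‖bt j‖ ^ 2 < (2 ^ (l - 1) +
      1/2 * ∑ i ∈ Finset.Ioi j, |(c i : ℝ)|) * ‖bt j‖ ^ 2 := by
      rw [← abs_of_nonneg (sq_nonneg ‖bt j‖), ← abs_mul, abs_of_nonneg (sq_nonneg ‖bt j‖), hc,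
        add_mul]
      exact lt_of_le_of_lt (abs_sub _ _) (add_lt_add_of_lt_of_le hcs hS)
    exact lt_of_mul_lt_mul_right hfin (sq_nonneg _)
  let d : ℕ → ℝ := fun k => |(c ⟨l - 1 - k, by omega⟩ : ℝ)|
  have hd : ∀ i < l, d i < 2 ^ (l-1) + 1/2 * ∑ k ∈ Finset.range i, d k := by
    intro i hi
    have h1 := hmain ⟨l - 1 - i, by omega⟩
    have h2 : ∑ k ∈ Finset.Ioi (⟨l - 1 - i, by omega⟩ : Fin l), |(c k : ℝ)|
        = ∑ k ∈ Finset.range i, d k := by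
      refine Finset.sum_nbij' (fun k => l - 1 - (k : ℕ)) (fun k => ⟨l - 1 - k, by omega⟩)
        ?_ ?_ ?_ ?_ ?_
      · intro k hk
        simp only [Finset.mem_Ioi, Fin.lt_def] at hk
        simp only [Finset.mem_range]
        omega
      · intro k hk
        simp only [Finset.mem_range] at hk
        simp only [Finset.mem_Ioi, Fin.lt_def]
        omega
      · intro k hk
        apply Fin.ext
        simp only
        omega
      · intro k hk
        simp only [Finset.mem_range] at hk
        simp only
        omega
      · intro k hk
        have : (⟨l - 1 - (l - 1 - (k:ℕ)), by omega⟩ : Fin l) = k := by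
          apply Fin.ext
          simp only
          omega
        simp only [d, this]
    rw [h2] at h1
    exact h1
  intro i h
  have h1 := hd i h
  have h2 := aux_seq d (2 ^ (l-1)) (by positivity) l hd i h.le
  have h3 : (1:ℝ) ≤ 2 ^ i := one_le_pow₀ (by norm_num)
  have h4 : (0:ℝ) < 2 ^ (l-1) := by positivity
  have h5 : (2:ℝ) ^ (l + i - 1) = 2 ^ (l-1) * 2 ^ i := by
    rw [← pow_add]; congr 1; omega
  rw [h5]
  change d i < _
  nlinarith
end

section
/- (Theorem 1, coefficient form.) Let b_1, …, b_m be a δ-LLL-reduced basis of a full-rank lattice L in ℝ^m, define α_0 = 1 and α_i = (δ − 1/4)^i + (1/2)·Σ_{k=0}^{i−1} α_k for i ≥ 1, and let v_0 be a shortest nonzero vector of L, written as v_0 = Σ_{i=1}^{m} c_i b_i with integer coefficients c_i. Then |c_{m−i}| ≤ α_i · (δ − 1/4)^{1−m} for all i = 0, 1, …, m−1; consequently an encoding in which the (m−i)-th coefficient ranges over all integers of absolute value at most α_i·(δ − 1/4)^{1−m} is capable of representing the shortest nonzero vector of the lattice. -/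
open Finset
open scoped RealInnerProductSpace

/-- Theorem 1, coefficient form: For a δ-LLL-reduced basis
`b_1, …, b_m` of the full-rank lattice `L = {Σ c_i b_i : c_i ∈ ℤ} ⊆ ℝ^m`, the
sequence `α_0 = 1`, `α_i = (δ − 1/4)^i + (1/2)·Σ_{k=0}^{i−1} α_k`, and a shortest
nonzero lattice vector `v_0 = Σ c_i b_i`, the coefficients satisfy
`|c_{m−i}| ≤ α_i·(δ − 1/4)^(1−m)` for all `i = 0, 1, …, m−1`. -/
theorem shortest_vector_coefficient_bound
    (M : ℕ) (hm : 1 ≤ M) (δ : ℝ) (hδ : 1/4 < δ ∧ δ < 1)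
    (b bt : Fin M → EuclideanSpace ℝ (Fin M))
    (μ : Fin M → Fin M → ℝ)
    (hind : LinearIndependent ℝ b)
    (hμ : ∀ i j : Fin M, j < i → μ j i = ⟪b i, bt j⟫ / ⟪bt j, bt j⟫)
    (hbt : ∀ i : Fin M, bt i = b i - ∑ j ∈ Finset.Iio i, μ j i • bt j)
    (hsize : ∀ i j : Fin M, j < i → |μ j i| ≤ 1/2)
    (hLovasz : ∀ (i : Fin M) (h : (i : ℕ) + 1 < M),
      ‖bt ⟨(i : ℕ) + 1, h⟩‖ ^ 2 ≥ (δ - (μ i ⟨(i : ℕ) + 1, h⟩) ^ 2) * ‖bt i‖ ^ 2)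
    (α : ℕ → ℝ)
    (hα0 : α 0 = 1)
    (hα : ∀ i : ℕ, 1 ≤ i →
      α i = (δ - 1/4) ^ i + (1/2) * ∑ k ∈ Finset.range i, α k)
    (L : Set (EuclideanSpace ℝ (Fin M)))
    (hL : L = {w | ∃ d : Fin M → ℤ, w = ∑ i, (d i : ℝ) • b i})
    (c : Fin M → ℤ) (v₀ : EuclideanSpace ℝ (Fin M))
    (hv₀ : v₀ = ∑ i, (c i : ℝ) • b i)
    (hv₀ne : v₀ ≠ 0)
    (hshort : ∀ w ∈ L, w ≠ 0 → ‖v₀‖ ≤ ‖w‖) :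
    ∀ i : ℕ, ∀ h : i < M,
      |(c ⟨M - 1 - i, by omega⟩ : ℝ)| ≤ α i * (δ - 1/4) ^ ((1 : ℤ) - (M : ℤ)) := by
  
  obtain ⟨hδ1, hδ2⟩ := hδ
  have hβ : 0 < δ - 1/4 := by linarith
  have hβ1 : δ - 1/4 ≤ 1 := by linarith
  -- `bt` is Mathlib's Gram-Schmidt family
  have hgs : ∀ n : ℕ, ∀ h : n < M,
      bt ⟨n, h⟩ = InnerProductSpace.gramSchmidt ℝ b ⟨n, h⟩ := by
    intro n
    induction n using Nat.strong_induction_on with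
    | _ n ih =>
      intro h
      rw [hbt, InnerProductSpace.gramSchmidt_def]
      congr 1
      refine Finset.sum_congr rfl fun j hj => ?_
      have hj' : j < ⟨n, h⟩ := Finset.mem_Iio.mp hj
      have e := ih j.1 hj' j.2
      have e' : bt j = InnerProductSpace.gramSchmidt ℝ b j := e
      rw [hμ _ _ hj', Submodule.starProjection_singleton, ← e', real_inner_self_eq_norm_sq,
        real_inner_comm]
      simp
  have hgs' : bt = InnerProductSpace.gramSchmidt ℝ b := by
    funext k; exact hgs k.1 k.2
  have hne : ∀ k, bt k ≠ 0 := by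
    intro k; rw [hgs']; exact InnerProductSpace.gramSchmidt_ne_zero k hind
  have hpos : ∀ k, 0 < ‖bt k‖ := fun k => norm_pos_iff.mpr (hne k)
  have hlow : ∀ k j, j < k → ⟪bt k, b j⟫ = 0 := by
    intro k j hjk; rw [hgs']
    exact InnerProductSpace.gramSchmidt_inv_triangular ℝ b hjk
  have horth : ∀ k j, k ≠ j → ⟪bt k, bt j⟫ = 0 := by
    intro k j hjk; rw [hgs']
    exact InnerProductSpace.gramSchmidt_orthogonal ℝ b hjk
  have hdiag : ∀ k, ⟪bt k, b k⟫ = ‖bt k‖ ^ 2 := by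
    intro k
    have e : b k = bt k + ∑ j ∈ Finset.Iio k, μ j k • bt j := by
      rw [hbt k]; simp
    rw [e, inner_add_right, inner_sum, Finset.sum_eq_zero, real_inner_self_eq_norm_sq, add_zero]
    intro j hj
    rw [inner_smul_right, horth k j (Finset.mem_Iio.mp hj).ne', mul_zero]
  have hup : ∀ k j, k < j → ⟪bt k, b j⟫ = μ k j * ‖bt k‖ ^ 2 := by
    intro k j hkj
    rw [hμ j k hkj, real_inner_self_eq_norm_sq, real_inner_comm,
      div_mul_cancel₀ _ (pow_ne_zero 2 (hpos k).ne')]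
  have h0 : 0 < M := hm
  have hb0 : bt ⟨0, h0⟩ = b ⟨0, h0⟩ := by
    rw [hbt, Finset.sum_eq_zero, sub_zero]
    intro j hj
    exact absurd (Finset.mem_Iio.mp hj) (by simp [Fin.lt_def])
  have hv : ‖v₀‖ ≤ ‖bt ⟨0, h0⟩‖ := by
    apply hshort _ _ (hne _)
    rw [hL]
    refine ⟨Pi.single ⟨0, h0⟩ 1, ?_⟩
    rw [Finset.sum_eq_single ⟨0, h0⟩]
    · simp [hb0]
    · intro j _ hj; simp [hj]
    · simp
  have hgrow : ∀ n : ℕ, ∀ h : n < M,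
      (δ - 1/4) ^ n * ‖bt ⟨0, h0⟩‖ ^ 2 ≤ ‖bt ⟨n, h⟩‖ ^ 2 := by
    intro n
    induction n with
    | zero => intro h; simp
    | succ n ih =>
      intro h
      have h1 := ih (by omega)
      have h2 := hLovasz ⟨n, by omega⟩ h
      have h3 := hsize ⟨n + 1, h⟩ ⟨n, by omega⟩ (by simp [Fin.lt_def])
      have h4 : (μ ⟨n, by omega⟩ ⟨n + 1, h⟩) ^ 2 ≤ 1/4 := by
        have := abs_le.mp h3
        nlinarith
      calc (δ - 1/4) ^ (n+1) * ‖bt ⟨0, h0⟩‖ ^ 2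
          = (δ - 1/4) * ((δ - 1/4) ^ n * ‖bt ⟨0, h0⟩‖ ^ 2) := by ring
        _ ≤ (δ - 1/4) * ‖bt ⟨n, by omega⟩‖ ^ 2 := by gcongr
        _ ≤ (δ - (μ ⟨n, by omega⟩ ⟨n + 1, h⟩) ^ 2) * ‖bt ⟨n, by omega⟩‖ ^ 2 := by
            gcongr
        _ ≤ _ := h2
  -- the Gram-Schmidt coefficient of `v₀`
  have hcoef : ∀ k : Fin M, ⟪bt k, v₀⟫
      = ((c k : ℝ) + ∑ j ∈ Finset.Ioi k, (c j : ℝ) * μ k j) * ‖bt k‖ ^ 2 := by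
    intro k
    rw [hv₀, inner_sum, add_mul, Finset.sum_mul]
    have hsub : ∑ j ∈ Finset.Ici k, ⟪bt k, (c j : ℝ) • b j⟫ = ∑ j, ⟪bt k, (c j : ℝ) • b j⟫ := by
      apply Finset.sum_subset (Finset.subset_univ _)
      intro j _ hj
      rw [inner_smul_right, hlow k j (by simpa using hj), mul_zero]
    rw [← hsub, ← Finset.Ioi_insert, Finset.sum_insert (by simp), inner_smul_right, hdiag]
    congr 1
    refine Finset.sum_congr rfl fun j hj => ?_
    rw [inner_smul_right, hup k j (Finset.mem_Ioi.mp hj), mul_assoc]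
  have hbd : ∀ k : Fin M, |(c k : ℝ) + ∑ j ∈ Finset.Ioi k, (c j : ℝ) * μ k j|
      ≤ ((δ - 1/4) ^ (k : ℕ))⁻¹ := by
    intro k
    set x := (c k : ℝ) + ∑ j ∈ Finset.Ioi k, (c j : ℝ) * μ k j with hx
    have h1 : |x| * ‖bt k‖ ^ 2 ≤ ‖bt k‖ * ‖v₀‖ := by
      have := abs_real_inner_le_norm (bt k) v₀
      rw [hcoef k, abs_mul, abs_of_nonneg (sq_nonneg ‖bt k‖)] at this
      exact this
    have h2 : |x| * ‖bt k‖ ≤ ‖bt ⟨0, h0⟩‖ := by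
      refine le_trans ?_ hv
      refine le_of_mul_le_mul_left ?_ (hpos k)
      linarith [h1, show ‖bt k‖ * (|x| * ‖bt k‖) = |x| * ‖bt k‖ ^ 2 by ring]
    have hp : 0 < (δ - 1/4) ^ (k : ℕ) := pow_pos hβ _
    have hp1 : (δ - 1/4) ^ (k : ℕ) ≤ 1 := pow_le_one₀ hβ.le hβ1
    have h3 : (δ - 1/4) ^ (k : ℕ) * ‖bt ⟨0, h0⟩‖ ≤ ‖bt k‖ := by
      apply le_of_sq_le_sq _ (hpos k).le
      refine le_trans ?_ (hgrow k.1 k.2)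
      rw [mul_pow]
      gcongr
      nlinarith
    rw [← one_div, le_div_iff₀ hp]
    refine le_of_mul_le_mul_right ?_ (hpos ⟨0, h0⟩)
    calc |x| * (δ - 1/4) ^ (k : ℕ) * ‖bt ⟨0, h0⟩‖
        = |x| * ((δ - 1/4) ^ (k : ℕ) * ‖bt ⟨0, h0⟩‖) := by ring
      _ ≤ |x| * ‖bt k‖ := by gcongr
      _ ≤ 1 * ‖bt ⟨0, h0⟩‖ := by rw [one_mul]; exact h2
  intro i
  induction i using Nat.strong_induction_on with
  | _ i ih =>
    intro h
    set k : Fin M := ⟨M - 1 - i, by omega⟩ with hk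
    set B := (δ - 1/4) ^ ((1 : ℤ) - (M : ℤ)) with hB
    have hαi : α i = (δ - 1/4) ^ i + (1/2) * ∑ k ∈ Finset.range i, α k := by
      rcases Nat.eq_zero_or_pos i with rfl | hi
      · simp [hα0]
      · exact hα i hi
    have hpw : ((δ - 1/4) ^ (k : ℕ))⁻¹ = (δ - 1/4) ^ i * B := by
      rw [hB, ← zpow_natCast, ← zpow_natCast, ← zpow_neg, ← zpow_add₀ hβ.ne']
      congr 1
      simp only [hk]
      omega
    have hsum : |∑ j ∈ Finset.Ioi k, (c j : ℝ) * μ k j|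
        ≤ (1/2) * ∑ n ∈ Finset.range i, α n * B := by
      refine (Finset.abs_sum_le_sum_abs _ _).trans ?_
      rw [Finset.mul_sum]
      calc ∑ j ∈ Finset.Ioi k, |(c j : ℝ) * μ k j|
          ≤ ∑ j ∈ Finset.Ioi k, (1/2) * (α (M - 1 - j) * B) := by
            refine Finset.sum_le_sum fun j hj => ?_
            have hkj : k < j := Finset.mem_Ioi.mp hj
            have hkj' : M - 1 - i < j.1 := hkj
            have := ih (M - 1 - j) (by omega) (by omega)
            have e : (⟨M - 1 - (M - 1 - j.1), by omega⟩ : Fin M) = j := by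
              ext; simp only; omega
            rw [e] at this
            rw [abs_mul, mul_comm]
            exact mul_le_mul (hsize j k hkj) this (abs_nonneg _) (by norm_num)
        _ = _ := by
            refine Finset.sum_bij' (fun j _ => M - 1 - j.1)
              (fun n _ => ⟨M - 1 - n, by omega⟩) ?_ ?_ ?_ ?_ ?_
            · intro j hj
              have hkj : k < j := Finset.mem_Ioi.mp hj
              have hkj' : M - 1 - i < j.1 := hkj
              simp only [Finset.mem_range]; omega
            · intro n hn
              have := Finset.mem_range.mp hn
              simp only [Finset.mem_Ioi, hk, Fin.lt_def]; omega
            · intro j hj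
              ext; simp only; omega
            · intro n hn
              have := Finset.mem_range.mp hn
              simp only; omega
            · intro j hj; rfl
    have h1 := hbd k
    rw [hpw] at h1
    rw [hαi, add_mul, mul_assoc, Finset.sum_mul]
    rw [abs_le] at *
    constructor <;> linarith [h1.1, h1.2, hsum.1, hsum.2]
end

section
/- (Theorem 1, qubit count for δ = 3/4.) Let b_1, …, b_m be a (3/4)-LLL-reduced basis of a full-rank lattice in ℝ^m. If the (m−i)-th coefficient is encoded with ξ_{m−i} = m + i binary digits (representing the integers from −2^{m+i−1} to 2^{m+i−1} − 1), for i = 0, 1, …, m−1, then every lattice vector v = Σ_{i=1}^{m} c_i b_i with integer coefficients and ‖v‖ < ‖b_1‖ — in particular every shortest nonzero lattice vector — has each coefficient c_{m−i} within the representable range [−2^{m+i−1}, 2^{m+i−1} − 1], and the total number of binary digits used is Σ_{i=0}^{m−1} (m + i) = m(3m − 1)/2. -/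
open Finset
open scoped RealInnerProductSpace

theorem aux_orth {M : ℕ} (b bt : Fin M → EuclideanSpace ℝ (Fin M)) (μ : Fin M → Fin M → ℝ)
    (hμ : ∀ i j : Fin M, j < i → μ j i = ⟪b i, bt j⟫ / ⟪bt j, bt j⟫)
    (hbt : ∀ i : Fin M, bt i = b i - ∑ j ∈ Finset.Iio i, μ j i • bt j) :
    ∀ n : ℕ, ∀ i : Fin M, (i : ℕ) = n → ∀ j : Fin M, j < i → ⟪bt i, bt j⟫ = 0 := by
  intro n
  induction n using Nat.strong_induction_on with
  | _ n ih =>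
    intro i hi j hj
    have hne : ∀ k : Fin M, k < i → k ≠ j → ⟪bt k, bt j⟫ = 0 := by
      intro k hk hkj
      rcases lt_or_gt_of_ne hkj with h | h
      · rw [real_inner_comm]
        exact ih j (by rw [← hi]; exact hj) j rfl k h
      · exact ih k (by rw [← hi]; exact hk) k rfl j h
    rw [hbt i, inner_sub_left, sum_inner]
    rw [Finset.sum_eq_single j]
    · rw [real_inner_smul_left, hμ i j hj]
      by_cases h0 : bt j = 0
      · simp [h0]
      · have : ⟪bt j, bt j⟫ ≠ 0 := by simpa using h0
        field_simp
        simp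
    · intro k hk hkj
      rw [real_inner_smul_left, hne k (Finset.mem_Iio.mp hk) hkj, mul_zero]
    · intro h
      exact absurd (Finset.mem_Iio.mpr hj) h

theorem aux_geom {M : ℕ} (k : Fin M) :
    ∑ i ∈ Finset.Ioi k, (2 : ℝ) ^ (M - 1 - (i : ℕ)) = 2 ^ (M - 1 - (k : ℕ)) - 1 := by
  have h : ∑ i ∈ Finset.Ioi k, (2 : ℝ) ^ (M - 1 - (i : ℕ))
      = ∑ j ∈ Finset.range (M - 1 - (k : ℕ)), (2 : ℝ) ^ j := by
    refine Finset.sum_bij (fun i _ => M - 1 - (i : ℕ)) ?_ ?_ ?_ ?_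
    · intro i hi
      have := Finset.mem_Ioi.mp hi
      rw [Fin.lt_def] at this
      simp only [Finset.mem_range]
      omega
    · intro i _ j _ hij
      ext
      have := i.2
      have := j.2
      omega
    · intro j hj
      have := Finset.mem_range.mp hj
      refine ⟨⟨M - 1 - j, by omega⟩, ?_, ?_⟩
      · rw [Finset.mem_Ioi, Fin.lt_def]
        simp only
        omega
      · simp only
        omega
    · intro i _
      rfl
  rw [h, geom_sum_eq (by norm_num)]
  norm_num

/-- Theorem 1, qubit count for δ = 3/4: For a (3/4)-LLL-reduced basis
`b_1, …, b_m` of a full-rank lattice in ℝ^m, if the `(m−i)`-th coefficient is encoded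
with `ξ_{m−i} = m + i` binary digits (representing the integers from `−2^(m+i−1)` to
`2^(m+i−1) − 1`), then every lattice vector `v = Σ c_i b_i` with integer coefficients
and `‖v‖ < ‖b_1‖` has each coefficient `c_{m−i}` in the representable range
`[−2^(m+i−1), 2^(m+i−1) − 1]`, and the total number of binary digits used is
`Σ_{i=0}^{m−1} (m + i) = m(3m − 1)/2`. -/
theorem qubit_count_theorem
    (M : ℕ) (hm : 1 ≤ M)
    (b bt : Fin M → EuclideanSpace ℝ (Fin M))
    (μ : Fin M → Fin M → ℝ)
    (hind : LinearIndependent ℝ b)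
    (hμ : ∀ i j : Fin M, j < i → μ j i = ⟪b i, bt j⟫ / ⟪bt j, bt j⟫)
    (hbt : ∀ i : Fin M, bt i = b i - ∑ j ∈ Finset.Iio i, μ j i • bt j)
    (hsize : ∀ i j : Fin M, j < i → |μ j i| ≤ 1/2)
    (hLovasz : ∀ (i : Fin M) (h : (i : ℕ) + 1 < M),
      ‖bt ⟨(i : ℕ) + 1, h⟩‖ ^ 2 ≥ (3/4 - (μ i ⟨(i : ℕ) + 1, h⟩) ^ 2) * ‖bt i‖ ^ 2)
    (ξ : ℕ → ℕ) (hξ : ∀ i : ℕ, i < M → ξ (M - i) = M + i) :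
    (∀ (c : Fin M → ℤ),
      ‖∑ i, (c i : ℝ) • b i‖ < ‖b ⟨0, by omega⟩‖ →
      ∀ i : ℕ, ∀ h : i < M,
        -(2 ^ (M + i - 1) : ℤ) ≤ c ⟨M - 1 - i, by omega⟩ ∧
          c ⟨M - 1 - i, by omega⟩ ≤ 2 ^ (M + i - 1) - 1) ∧
    ∑ i ∈ Finset.range M, ξ (M - i) = M * (3 * M - 1) / 2 := by
  have horth := aux_orth b bt μ hμ hbt
  refine ⟨?_, ?_⟩
  · intro c hv
    set v := ∑ i, (c i : ℝ) • b i with hvdef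
    have hb0 : bt ⟨0, by omega⟩ = b ⟨0, by omega⟩ := by
      rw [hbt, sub_eq_self]
      apply Finset.sum_eq_zero
      intro j hj
      have := Finset.mem_Iio.mp hj
      rw [Fin.lt_def] at this
      simp at this
    have hdec : ∀ n : ℕ, ∀ h : n < M, ‖b ⟨0, by omega⟩‖ ≤ 2 ^ n * ‖bt ⟨n, h⟩‖ := by
      intro n
      induction n with
      | zero => intro h; rw [hb0]; simp
      | succ n ih =>
        intro h
        have h1 := ih (by omega)
        have h2 := hLovasz ⟨n, by omega⟩ h
        have h3 := hsize ⟨n + 1, h⟩ ⟨n, by omega⟩ (by rw [Fin.lt_def]; simp)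
        simp only at h2
        have h4 : (μ ⟨n, by omega⟩ ⟨n + 1, h⟩) ^ 2 ≤ 1 / 4 := by
          rw [← sq_abs]
          nlinarith [abs_nonneg (μ ⟨n, by omega⟩ ⟨n + 1, h⟩)]
        have h5 : ‖bt ⟨n, by omega⟩‖ ≤ 2 * ‖bt ⟨n + 1, h⟩‖ := by
          apply le_of_sq_le_sq _ (by positivity)
          nlinarith [sq_nonneg ‖bt ⟨n, by omega⟩‖]
        calc _ ≤ _ := h1
          _ ≤ 2 ^ n * (2 * ‖bt ⟨n + 1, h⟩‖) := by gcongr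
          _ = _ := by ring
    have hinner : ∀ k : Fin M, ⟪v, bt k⟫ =
        ((c k : ℝ) + ∑ i ∈ Finset.Ioi k, (c i : ℝ) * μ k i) * ‖bt k‖ ^ 2 := by
      intro k
      have hlt : ∀ i : Fin M, k < i → ⟪b i, bt k⟫ = μ k i * ‖bt k‖ ^ 2 := by
        intro i hi
        rw [hμ i k hi, real_inner_self_eq_norm_sq]
        by_cases h0 : bt k = 0
        · simp [h0]
        · have : ‖bt k‖ ≠ 0 := by simpa using h0
          field_simp
      have hb : ∀ i, b i = bt i + ∑ j ∈ Finset.Iio i, μ j i • bt j := by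
        intro i
        rw [hbt i]
        simp
      have hle : ∀ i : Fin M, i ≤ k → ⟪b i, bt k⟫ = ⟪bt i, bt k⟫ := by
        intro i hi
        rw [hb i, inner_add_left, sum_inner, add_eq_left]
        apply Finset.sum_eq_zero
        intro j hj
        rw [real_inner_smul_left, real_inner_comm,
          horth k k rfl j (lt_of_lt_of_le (Finset.mem_Iio.mp hj) hi), mul_zero]
      have hall : ∀ i : Fin M, ⟪(c i : ℝ) • b i, bt k⟫ =
          (if i = k then (c k : ℝ) * ‖bt k‖ ^ 2 else 0)
          + (if i ∈ Finset.Ioi k then (c i : ℝ) * μ k i * ‖bt k‖ ^ 2 else 0) := by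
        intro i
        rw [real_inner_smul_left]
        rcases lt_trichotomy i k with h | h | h
        · rw [hle i h.le, real_inner_comm, horth k k rfl i h]
          simp [h.ne, h.le]
        · subst h
          rw [hle i le_rfl, real_inner_self_eq_norm_sq]
          simp
        · rw [hlt i h]
          simp [h.ne', h]
          ring
      rw [hvdef, sum_inner, Finset.sum_congr rfl (fun i _ => hall i), Finset.sum_add_distrib,
        Finset.sum_ite_mem, add_mul, Finset.sum_mul]
      simp
    have hd : ∀ k : Fin M, |(c k : ℝ) + ∑ i ∈ Finset.Ioi k, (c i : ℝ) * μ k i| < 2 ^ (M - 1) := by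
      intro k
      have h1 := hdec k k.2
      have hpos : 0 < ‖bt k‖ := by
        by_contra hn
        have h0 : ‖bt k‖ = 0 := le_antisymm (not_lt.mp hn) (norm_nonneg _)
        simp only [Fin.eta] at h1
        rw [h0, mul_zero] at h1
        linarith [norm_nonneg v]
      have h2 := abs_real_inner_le_norm v (bt k)
      rw [hinner k, abs_mul, abs_of_nonneg (sq_nonneg ‖bt k‖), sq, ← mul_assoc] at h2
      have h3 := le_of_mul_le_mul_right h2 hpos
      have h4 : (2 : ℝ) ^ (k : ℕ) ≤ 2 ^ (M - 1) :=
        pow_le_pow_right₀ (by norm_num) (by have := k.2; omega)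
      have h5 : |(c k : ℝ) + ∑ i ∈ Finset.Ioi k, (c i : ℝ) * μ k i| * ‖bt k‖
          < 2 ^ (k : ℕ) * ‖bt k‖ := lt_of_le_of_lt h3 (lt_of_lt_of_le hv h1)
      exact lt_of_lt_of_le (lt_of_mul_lt_mul_right h5 hpos.le) h4
    have hc : ∀ n : ℕ, ∀ k : Fin M, M - 1 - (k : ℕ) = n →
        |(c k : ℝ)| < 2 ^ (M - 1) * 2 ^ n := by
      intro n
      induction n using Nat.strong_induction_on with
      | _ n ih =>
        intro k hk
        have h1 := hd k
        have h2 : |∑ i ∈ Finset.Ioi k, (c i : ℝ) * μ k i|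
            ≤ ∑ i ∈ Finset.Ioi k, 2 ^ (M - 1) / 2 * (2 : ℝ) ^ (M - 1 - (i : ℕ)) := by
          refine (Finset.abs_sum_le_sum_abs _ _).trans (Finset.sum_le_sum ?_)
          intro i hi
          have hi := Finset.mem_Ioi.mp hi
          have hi' := hi
          rw [Fin.lt_def] at hi'
          have := i.2
          have h3 := ih (M - 1 - (i : ℕ)) (by omega) i rfl
          rw [abs_mul]
          calc _ ≤ (2 ^ (M - 1) * 2 ^ (M - 1 - (i : ℕ))) * (1 / 2 : ℝ) :=
                mul_le_mul h3.le (hsize i k hi) (abs_nonneg _) (by positivity)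
            _ = _ := by ring
        rw [← Finset.mul_sum, aux_geom, hk] at h2
        have h4 : |(c k : ℝ)| ≤ |(c k : ℝ) + ∑ i ∈ Finset.Ioi k, (c i : ℝ) * μ k i|
            + |∑ i ∈ Finset.Ioi k, (c i : ℝ) * μ k i| := by
          have := abs_sub ((c k : ℝ) + ∑ i ∈ Finset.Ioi k, (c i : ℝ) * μ k i)
            (∑ i ∈ Finset.Ioi k, (c i : ℝ) * μ k i)
          simpa using this
        have h5 : (1 : ℝ) ≤ 2 ^ n := one_le_pow₀ (by norm_num)
        have h6 : (0 : ℝ) < 2 ^ (M - 1) := by positivity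
        nlinarith [mul_le_mul_of_nonneg_left h5 h6.le]
    intro i h
    have h1 := hc i ⟨M - 1 - i, by omega⟩ (by simp only; omega)
    rw [← pow_add, show M - 1 + i = M + i - 1 by omega] at h1
    have h2 : |c ⟨M - 1 - i, by omega⟩| < (2 : ℤ) ^ (M + i - 1) := by exact_mod_cast h1
    rw [abs_lt] at h2
    constructor <;> linarith [h2.1, Int.le_sub_one_of_lt h2.2]
  · rw [Finset.sum_congr rfl (fun i hi => hξ i (Finset.mem_range.mp hi)), Finset.sum_add_distrib]
    have h := Finset.sum_range_id_mul_two M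
    obtain ⟨m, rfl⟩ : ∃ m, M = m + 1 := ⟨M - 1, by omega⟩
    simp only [Finset.sum_const, Finset.card_range, smul_eq_mul]
    symm
    apply Nat.div_eq_of_eq_mul_left (by norm_num)
    rw [Nat.add_sub_cancel] at h
    rw [show 3 * (m + 1) - 1 = 3 * m + 2 by omega]
    linarith
end
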